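/- If A is a thin set of natural numbers, then the set of multiples M(A) := {an : a ∈ A, n ∈ ℕ} possesses an asymptotic density. -/

import Mathlib

open Filter

open scoped Classical in
noncomputable def countIn (A : Set ℕ) (x : ℕ) : ℕ :=
  ((Finset.Icc 1 x).filter (fun n => n ∈ A)).card

/-- `A ⊆ ℕ` has asymptotic density `δ`. -/
def HasDensity (A : Set ℕ) (δ : ℝ) : Prop :=
  Tendsto (fun x : ℕ => (countIn A x : ℝ) / x) atTop (nhds δ)

/-- `A` is thin: `∑_{a ∈ A} 1/a < ∞`. -/
def Thin (A : Set ℕ) : Prop := Summable (fun a : A => (1 : ℝ) / a)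

/-- The set of multiples of `A`: positive integers with at least one divisor in `A`. -/
def setOfMultiples (A : Set ℕ) : Set ℕ := {n : ℕ | 0 < n ∧ ∃ a ∈ A, a ∣ n}

/-!
If `∑_{a ∈ A} 1/a` converges, discarding all but finitely many elements of `A` changes its multiples
by a set with at most `ε x` elements up to `x`, by the union bound
`#{n ≤ x : some a ∈ B divides n} ≤ ∑_{a ∈ B} x/a`. The multiples of a finite set are periodic, hence
have a density. So `x ↦ #(M(A) ∩ [1, x]) / x` is approximated within every `ε > 0` by a convergent
sequence, and is therefore Cauchy.
-/

open scoped Topology symmDiff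

theorem tendsto_tsum_sdiff_atTop_zero {ι G : Type*} [AddCommGroup G] [TopologicalSpace G]
    [IsTopologicalAddGroup G] (A : Set ι) (f : ι → G) :
    Tendsto (fun s : Finset ι => ∑' a : ↥(A \ s), f a) atTop (𝓝 0) := by
  refine (tendsto_tsum_compl_atTop_zero (A.indicator f)).congr fun s => ?_
  calc ∑' a : {i // i ∉ s}, A.indicator f a
      = ∑' i, (↑s : Set ι)ᶜ.indicator (A.indicator f) i := tsum_subtype (↑s : Set ι)ᶜ _
    _ = ∑' i, (A \ s).indicator f i := by
        rw [Set.indicator_indicator, Set.inter_comm, Set.sdiff_eq]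
    _ = ∑' a : ↥(A \ s), f a := (tsum_subtype (A \ s) f).symm

theorem cauchy_map_of_forall_exists_dist_le {ι α : Type*} [PseudoMetricSpace α] {l : Filter ι}
    {u : ι → α}
    (h : ∀ ε > 0, ∃ v : ι → α, Cauchy (map v l) ∧ ∀ᶠ i in l, dist (u i) (v i) ≤ ε) :
    Cauchy (map u l) := by
  obtain ⟨v₁, hv₁, -⟩ := h 1 one_pos
  refine cauchy_map_iff.2 ⟨(cauchy_map_iff.1 hv₁).1,
    Metric.uniformity_basis_dist.tendsto_right_iff.2 fun ε hε => ?_⟩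
  obtain ⟨v, hv, huv⟩ := h (ε / 3) (by positivity)
  have hvv : ∀ᶠ p : ι × ι in l ×ˢ l, dist (v p.1) (v p.2) < ε / 3 :=
    (cauchy_map_iff.1 hv).2 (Metric.dist_mem_uniformity (by positivity))
  filter_upwards [hvv, huv.prod_mk huv] with p hp ⟨hp₁, hp₂⟩
  calc dist (u p.1) (u p.2)
      ≤ dist (u p.1) (v p.1) + dist (v p.1) (v p.2) + dist (v p.2) (u p.2) := dist_triangle4 ..
    _ < ε / 3 + ε / 3 + ε / 3 := by rw [dist_comm (v p.2)]; linarith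
    _ = ε := by ring

open scoped Classical in
theorem countIn_eq_count (A : Set ℕ) (x : ℕ) : countIn A x = Nat.count (fun n => n + 1 ∈ A) x := by
  have hshift : Finset.Icc 1 x = (Finset.range x).map (addRightEmbedding 1) := by
    rw [Finset.range_eq_Ico, Finset.map_add_right_Ico, zero_add, Finset.Ico_add_one_right_eq_Icc]
  rw [countIn, hshift, Finset.filter_map, Finset.card_map, Nat.count_eq_card_filter_range]
  rfl

theorem countIn_le (A : Set ℕ) (x : ℕ) : countIn A x ≤ x := by
  classical
  exact (countIn_eq_count A x).trans_le (Nat.count_le _)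

theorem countIn_mono {A B : Set ℕ} (h : A ⊆ B) (x : ℕ) : countIn A x ≤ countIn B x := by
  classical
  exact Finset.card_le_card (Finset.monotone_filter_right _ fun _ _ hn => h hn)

theorem countIn_union_le (A B : Set ℕ) (x : ℕ) : countIn (A ∪ B) x ≤ countIn A x + countIn B x := by
  classical
  simp only [countIn, Set.mem_union, Finset.filter_or]
  exact Finset.card_union_le _ _

theorem countIn_le_add_countIn_symmDiff (A B : Set ℕ) (x : ℕ) :
    countIn A x ≤ countIn B x + countIn (A ∆ B) x := by
  have hcover : A ⊆ B ∪ A ∆ B := fun n hn =>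
    (em (n ∈ B)).imp id fun hnB => .inl ⟨hn, hnB⟩
  exact (countIn_mono hcover x).trans (countIn_union_le B (A ∆ B) x)

theorem abs_countIn_sub_countIn_le (A B : Set ℕ) (x : ℕ) :
    |(countIn A x : ℝ) - countIn B x| ≤ countIn (A ∆ B) x := by
  have hAB : (countIn A x : ℝ) ≤ countIn B x + countIn (A ∆ B) x := by
    exact_mod_cast countIn_le_add_countIn_symmDiff A B x
  have hBA : (countIn B x : ℝ) ≤ countIn A x + countIn (A ∆ B) x := by
    exact_mod_cast symmDiff_comm A B ▸ countIn_le_add_countIn_symmDiff B A x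
  exact abs_sub_le_iff.2 ⟨by linarith, by linarith⟩

theorem exists_hasDensity_of_forall_countIn_symmDiff_le {A : Set ℕ}
    (h : ∀ ε > 0, ∃ B, (∃ δ, HasDensity B δ) ∧ ∀ᶠ x in atTop, (countIn (A ∆ B) x : ℝ) ≤ ε * x) :
    ∃ δ, HasDensity A δ := by
  refine cauchy_map_iff_exists_tendsto.1 (cauchy_map_of_forall_exists_dist_le fun ε hε => ?_)
  obtain ⟨B, ⟨δ, hδ⟩, hAB⟩ := h ε hε
  refine ⟨_, hδ.cauchy_map, ?_⟩
  filter_upwards [hAB, eventually_gt_atTop 0] with x hx hx₀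
  have hx₀' : (0 : ℝ) < x := Nat.cast_pos.2 hx₀
  rw [Real.dist_eq, ← sub_div, abs_div, abs_of_pos hx₀', div_le_iff₀ hx₀']
  exact (abs_countIn_sub_countIn_le A B x).trans hx

theorem count_add_mul_of_periodic {p : ℕ → Prop} [DecidablePred p] {L : ℕ}
    (hp : Function.Periodic p L) (r q : ℕ) :
    Nat.count p (r + q * L) = Nat.count p r + q * Nat.count p L := by
  induction q with
  | zero => simp
  | succ q ih =>
    have hshift : (fun k => p (k + L)) = p := funext hp
    rw [Nat.succ_mul, ← add_assoc, Nat.count_add']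
    simp only [hshift, ih]
    ring

theorem tendsto_natCast_div_const_div_atTop (L : ℕ) :
    Tendsto (fun x : ℕ => ((x / L : ℕ) : ℝ) / x) atTop (𝓝 (L : ℝ)⁻¹) := by
  have hfloor := (tendsto_nat_floor_mul_div_atTop (R := ℝ) (a := (L : ℝ)⁻¹) (by positivity)).comp
    tendsto_natCast_atTop_atTop
  refine hfloor.congr fun x => ?_
  rw [Function.comp_apply, inv_mul_eq_div, Nat.floor_div_eq_div]

-- The shift by one asks for periodicity on positive integers only: no set of multiples has `0`.
theorem hasDensity_of_periodic {A : Set ℕ} {L : ℕ} (hL : 0 < L)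
    (hA : Function.Periodic (fun n => n + 1 ∈ A) L) : HasDensity A (countIn A L / L) := by
  classical
  have hcount (x : ℕ) : countIn A x = countIn A (x % L) + x / L * countIn A L := by
    simp only [countIn_eq_count, ← count_add_mul_of_periodic hA, Nat.mod_add_div']
  have hremainder : Tendsto (fun x : ℕ => (countIn A (x % L) : ℝ) / x) atTop (𝓝 0) := by
    refine tendsto_bdd_div_atTop_nhds_zero (b := 0) (B := L) (.of_forall fun x => by positivity)
      (.of_forall fun x => ?_) tendsto_natCast_atTop_atTop
    exact_mod_cast (countIn_le A _).trans (Nat.mod_lt x hL).le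
  have hmain := hremainder.add
    ((tendsto_natCast_div_const_div_atTop L).mul_const (countIn A L : ℝ))
  rw [zero_add, inv_mul_eq_div] at hmain
  refine hmain.congr fun x => ?_
  rw [hcount x]
  push_cast
  ring

theorem setOfMultiples_symmDiff_subset (A B : Set ℕ) :
    setOfMultiples A ∆ setOfMultiples B ⊆ setOfMultiples (A ∆ B) := by
  rintro n (⟨⟨hn, a, ha, hdvd⟩, hnB⟩ | ⟨⟨hn, b, hb, hdvd⟩, hnA⟩)
  · exact ⟨hn, a, .inl ⟨ha, fun haB => hnB ⟨hn, a, haB, hdvd⟩⟩, hdvd⟩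
  · exact ⟨hn, b, .inr ⟨hb, fun hbA => hnA ⟨hn, b, hbA, hdvd⟩⟩, hdvd⟩

theorem periodic_succ_mem_setOfMultiples {A : Set ℕ} {L : ℕ}
    (hL : ∀ a ∈ A, a ≠ 0 → a ∣ L) :
    Function.Periodic (fun n => n + 1 ∈ setOfMultiples A) L := by
  intro n
  have dvd_iff {a : ℕ} (ha : a ∈ A) : a ∣ n + L + 1 ↔ a ∣ n + 1 := by
    obtain rfl | ha₀ := eq_or_ne a 0
    · simp only [zero_dvd_iff, Nat.add_one_ne_zero]
    · rw [add_right_comm, Nat.dvd_add_left (hL a ha ha₀)]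
  exact propext <| and_congr (by simp only [Nat.add_one_pos]) <|
    exists_congr fun a => and_congr_right dvd_iff

theorem exists_hasDensity_setOfMultiples_of_finite {A : Set ℕ} (hA : A.Finite) :
    ∃ δ, HasDensity (setOfMultiples A) δ := by
  have hpos : 0 < ∏ a ∈ hA.toFinset.erase 0, a :=
    Finset.prod_pos fun a ha => Nat.pos_of_ne_zero (Finset.ne_of_mem_erase ha)
  exact ⟨_, hasDensity_of_periodic hpos <| periodic_succ_mem_setOfMultiples fun a ha ha₀ =>
    Finset.dvd_prod_of_mem _ (Finset.mem_erase.2 ⟨ha₀, hA.mem_toFinset.2 ha⟩)⟩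

open scoped Classical in
theorem countIn_setOfMultiples_le_sum_div (A : Set ℕ) (x : ℕ) :
    countIn (setOfMultiples A) x ≤ ∑ a ∈ Finset.Icc 1 x with a ∈ A, x / a := by
  have hcover : {n ∈ Finset.Icc 1 x | n ∈ setOfMultiples A} ⊆
      {a ∈ Finset.Icc 1 x | a ∈ A}.biUnion fun a => {n ∈ Finset.Ioc 0 x | a ∣ n} := by
    intro n hn
    obtain ⟨hnx, hn₀, a, haA, hdvd⟩ := Finset.mem_filter.1 hn
    have hax : a ∈ Finset.Icc 1 x := Finset.mem_Icc.2
      ⟨Nat.pos_of_dvd_of_pos hdvd hn₀, (Nat.le_of_dvd hn₀ hdvd).trans (Finset.mem_Icc.1 hnx).2⟩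
    exact Finset.mem_biUnion.2
      ⟨a, Finset.mem_filter.2 ⟨hax, haA⟩, Finset.mem_filter.2 ⟨hnx, hdvd⟩⟩
  calc countIn (setOfMultiples A) x
      ≤ ∑ a ∈ Finset.Icc 1 x with a ∈ A, ({n ∈ Finset.Ioc 0 x | a ∣ n}).card :=
        (Finset.card_le_card hcover).trans Finset.card_biUnion_le
    _ = ∑ a ∈ Finset.Icc 1 x with a ∈ A, x / a := by simp only [Nat.Ioc_filter_dvd_card_eq_div]

theorem Thin.mono {A B : Set ℕ} (hB : Thin B) (h : A ⊆ B) : Thin A :=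
  (Summable.comp_injective hB (Set.inclusion_injective h)).congr fun _ => rfl

theorem Thin.countIn_setOfMultiples_le {A : Set ℕ} (hA : Thin A) (x : ℕ) :
    (countIn (setOfMultiples A) x : ℝ) ≤ (∑' a : A, (1 : ℝ) / a) * x := by
  classical
  calc (countIn (setOfMultiples A) x : ℝ)
      ≤ ∑ a ∈ Finset.Icc 1 x with a ∈ A, ((x / a : ℕ) : ℝ) := by
        exact_mod_cast countIn_setOfMultiples_le_sum_div A x
    _ ≤ ∑ a ∈ Finset.Icc 1 x with a ∈ A, 1 / (a : ℝ) * x := by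
        gcongr with a
        rw [one_div_mul_eq_div]
        exact Nat.cast_div_le
    _ = (∑ a ∈ (Finset.Icc 1 x).subtype (· ∈ A), 1 / ((a : ℕ) : ℝ)) * x := by
        rw [← Finset.sum_mul, ← Finset.sum_subtype_eq_sum_filter]
    _ ≤ (∑' a : A, (1 : ℝ) / a) * x := by
        gcongr
        exact hA.sum_le_tsum _ fun a _ => by positivity

theorem Thin.exists_finset_countIn_setOfMultiples_sdiff_le {A : Set ℕ} (hA : Thin A) {ε : ℝ}
    (hε : 0 < ε) : ∃ s : Finset ℕ, ∀ x, (countIn (setOfMultiples (A \ s)) x : ℝ) ≤ ε * x := by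
  obtain ⟨s, hs⟩ :=
    ((tendsto_tsum_sdiff_atTop_zero A fun n : ℕ => (1 : ℝ) / n).eventually_le_const hε).exists
  refine ⟨s, fun x => ((hA.mono Set.sdiff_subset).countIn_setOfMultiples_le x).trans ?_⟩
  gcongr

/-- (Erdős) If `A` is thin, then its set of multiples has an asymptotic density. -/
theorem thin_setOfMultiples_hasDensity (A : Set ℕ) (hA : Thin A) :
    ∃ δ : ℝ, HasDensity (setOfMultiples A) δ := by
  refine exists_hasDensity_of_forall_countIn_symmDiff_le fun ε hε => ?_
  obtain ⟨s, hs⟩ := hA.exists_finset_countIn_setOfMultiples_sdiff_le hε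
  have hfinite : (A ∩ s).Finite := s.finite_toSet.inter_of_right A
  refine ⟨setOfMultiples (A ∩ s), exists_hasDensity_setOfMultiples_of_finite hfinite,
    .of_forall fun x => ?_⟩
  have hdiff : A ∆ (A ∩ s) = A \ s := by
    rw [symmDiff_of_ge Set.inter_subset_left, Set.sdiff_self_inter]
  calc (countIn (setOfMultiples A ∆ setOfMultiples (A ∩ s)) x : ℝ)
      ≤ countIn (setOfMultiples (A ∆ (A ∩ s))) x := by
        exact_mod_cast countIn_mono (setOfMultiples_symmDiff_subset A (A ∩ s)) x
    _ = countIn (setOfMultiples (A \ s)) x := by rw [hdiff]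
    _ ≤ ε * x := hs x
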